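/- arXiv:2410.08859 — 3 statements merged into one kernel-verified Lean document; each statement's English description precedes it below -/
import Mathlib

section
/- Let X, Y, μ, ν, c, ε, φ₁, φ₂ (satisfying Assumption A) and partitions 𝒥_A, 𝒥_B of X be as in the sequential domain decomposition setting, and let (π^k)_{k≥0} be the sequential domain decomposition iterates started from a plan π⁰ with E(π⁰) < ∞. Then the scores are nonincreasing, E(π^{k+1}) ≤ E(π^k) for all k ≥ 0, and there exists a constant C < ∞ (depending only on E(π⁰), μ, ν, c, ε, φ₁, φ₂) such that 0 ≤ π^k(x,y) ≤ C·μ(x)ν(y) for all k ≥ 1 and all (x,y) ∈ X × Y. -/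
open Filter Topology
open scoped Classical

noncomputable section

/-- `φ : ℝ → ℝ ∪ {+∞}` is an entropy function: lower semicontinuous, convex,
`dom(φ) ⊆ [0,∞)`, `dom(φ)\{0} ≠ ∅`, never taking the value `-∞`. -/
def IsEntropyFn (φ : ℝ → EReal) : Prop :=
  LowerSemicontinuous φ ∧
  (∀ x y a b : ℝ, 0 ≤ a → 0 ≤ b → a + b = 1 →
      φ (a * x + b * y) ≤ (a : EReal) * φ x + (b : EReal) * φ y) ∧
  (∀ x : ℝ, φ x ≠ ⊥) ∧
  (∀ x : ℝ, φ x < ⊤ → 0 ≤ x) ∧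
  (∃ x : ℝ, x ≠ 0 ∧ φ x < ⊤)

/-- The recession slope `φ'_∞ = lim_{x→∞} φ(x)/x`. -/
def recessionSlope (φ : ℝ → EReal) : EReal :=
  Filter.limsup (fun x : ℝ => φ x * ((x⁻¹ : ℝ) : EReal)) Filter.atTop

/-- The `φ`-divergence on a finite set `Z`:
`D_φ(ρ|σ) = ∑_{z : σ z > 0} σ z · φ(ρ z / σ z) + φ'_∞ · ∑_{z : σ z = 0} ρ z`. -/
def divergence {Z : Type*} [Fintype Z] (φ : ℝ → EReal) (ρ σ : Z → ℝ) : EReal :=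
  (∑ z, if 0 < σ z then (σ z : EReal) * φ (ρ z / σ z) else 0)
    + recessionSlope φ * ((∑ z, if σ z = 0 then ρ z else 0 : ℝ) : EReal)

/-- The convex conjugate `φ*(z) = sup_{x ∈ ℝ} (z·x − φ(x))`. -/
def conjFn (φ : ℝ → EReal) (z : ℝ) : EReal :=
  ⨆ x : ℝ, (((z * x : ℝ) : EReal) - φ x)

/-- Kullback–Leibler divergence on a finite set, with `0·log 0 = 0`:
`KL(ρ|σ) = ∑ z (ρ z log(ρ z/σ z) − ρ z + σ z)` if `ρ ≪ σ`, else `+∞`. -/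
def KLfin {Z : Type*} [Fintype Z] (ρ σ : Z → ℝ) : EReal :=
  if ∀ z, σ z = 0 → ρ z = 0 then
    ((∑ z, (ρ z * Real.log (ρ z / σ z) - ρ z + σ z) : ℝ) : EReal)
  else ⊤

/-- Assumption A: the entropy function `φ` is nonnegative, finite on `[0,∞)`,
and continuously differentiable on the interior `(0,∞)` of its domain. -/
def AssumptionA (φ : ℝ → EReal) : Prop :=
  IsEntropyFn φ ∧ (∀ x : ℝ, 0 ≤ φ x) ∧ (∀ x : ℝ, 0 ≤ x → φ x ≠ ⊤) ∧
  ContDiffOn ℝ 1 (fun s : ℝ => (φ s).toReal) (Set.Ioi (0 : ℝ))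

/-- Primal objective of the unbalanced (cell) problem with `Y`-submarginal `νm`:
`E_J(π|νm) = ⟨c, π⟩ + ε KL(π | μ⊗ν) + D_{φ₁}(P_X π | μ) + D_{φ₂}(P_Y π + νm | ν)`. -/
def EJfun {W Y : Type*} [Fintype W] [Fintype Y]
    (c : W → Y → ℝ) (ε : ℝ) (φ₁ φ₂ : ℝ → EReal)
    (μ : W → ℝ) (ν : Y → ℝ) (νm : Y → ℝ) (π : W → Y → ℝ) : EReal :=
  ((∑ x, ∑ y, c x y * π x y : ℝ) : EReal)
    + (ε : EReal) * KLfin (fun p : W × Y => π p.1 p.2) (fun p : W × Y => μ p.1 * ν p.2)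
    + divergence φ₁ (fun x => ∑ y, π x y) μ
    + divergence φ₂ (fun y => (∑ x, π x y) + νm y) ν

/-- Dual objective of the unbalanced (cell) problem with `Y`-submarginal `νm`. -/
def DJfun {W Y : Type*} [Fintype W] [Fintype Y]
    (c : W → Y → ℝ) (ε : ℝ) (φ₁ φ₂ : ℝ → EReal)
    (μ : W → ℝ) (ν : Y → ℝ) (νm : Y → ℝ) (α : W → ℝ) (β : Y → ℝ) : EReal :=
  ((ε * ∑ x, ∑ y, (1 - Real.exp ((α x + β y - c x y) / ε)) * (μ x * ν y) : ℝ) : EReal)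
    - (∑ x, (μ x : EReal) * conjFn φ₁ (-(α x)))
    - (∑ y, (ν y : EReal) * conjFn φ₂ (-(β y)))
    - ((∑ y, β y * νm y : ℝ) : EReal)

/-- The `Y`-submarginal `ν_{-J}` of the plan `π` outside the cell `J`:
`ν_{-J}(y) = ∑_{x ∉ J} π(x,y)`. -/
def outMarg {X Y : Type*} [Fintype X] (J : Set X) (π : X → Y → ℝ) : Y → ℝ :=
  fun y => ∑ x, (Jᶜ).indicator (fun x' => π x' y) x

/-- The global unbalanced objective
`E(π) = ⟨c, π⟩ + ε KL(π|μ⊗ν) + D_{φ₁}(P_X π|μ) + D_{φ₂}(P_Y π|ν)`. -/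
def Eglobal {X Y : Type*} [Fintype X] [Fintype Y]
    (c : X → Y → ℝ) (ε : ℝ) (φ₁ φ₂ : ℝ → EReal)
    (μ : X → ℝ) (ν : Y → ℝ) (π : X → Y → ℝ) : EReal :=
  EJfun c ε φ₁ φ₂ μ ν (fun _ => 0) π

/-- An indexed family `Js : Fin n → Set X` is a partition of `X` into nonempty
subsets. -/
def IsFinPartition {X : Type*} {n : ℕ} (Js : Fin n → Set X) : Prop :=
  (∀ i, (Js i).Nonempty) ∧ (⋃ i, Js i) = Set.univ ∧
    ∀ i j, i ≠ j → Disjoint (Js i) (Js j)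

/-- `update` implements one cell update: `update J π` agrees with `π` outside
`J × Y` and its restriction to `J × Y` is the (unique) minimizer of the cell
subproblem `E_J(·|ν_{-J})` with `ν_{-J}(y) = ∑_{x ∉ J} π(x,y)`. -/
def IsCellUpdate {X Y : Type*} [Fintype X] [Fintype Y]
    (c : X → Y → ℝ) (ε : ℝ) (φ₁ φ₂ : ℝ → EReal) (μ : X → ℝ) (ν : Y → ℝ)
    (update : Set X → (X → Y → ℝ) → (X → Y → ℝ)) : Prop :=
  ∀ (J : Set X) (π : X → Y → ℝ), (∀ x y, 0 ≤ π x y) →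
    (∀ x y, 0 ≤ update J π x y) ∧
    (∀ x, x ∉ J → ∀ y, update J π x y = π x y) ∧
    ∀ π' : ↥J → Y → ℝ, (∀ (j : J) (y : Y), 0 ≤ π' j y) →
      EJfun (fun (j : J) y => c j y) ε φ₁ φ₂ (fun (j : J) => μ j) ν (outMarg J π)
          (fun (j : J) y => update J π j y)
        ≤ EJfun (fun (j : J) y => c j y) ε φ₁ φ₂ (fun (j : J) => μ j) ν (outMarg J π) π'

/-- One sequential domain decomposition sweep: cycle through the cells of the
partition in their fixed order, updating the current plan after each cell. -/
def sweep {X Y : Type*} (update : Set X → (X → Y → ℝ) → (X → Y → ℝ))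
    {n : ℕ} (Js : Fin n → Set X) (π : X → Y → ℝ) : X → Y → ℝ :=
  (List.ofFn Js).foldl (fun p J => update J p) π


theorem hlp_div {Z : Type*} [Fintype Z] (φ : ℝ → EReal) (h : AssumptionA φ) (ρ σ : Z → ℝ)
    (hσ : ∀ z, 0 < σ z) (hρ : ∀ z, 0 ≤ ρ z) :
    divergence φ ρ σ = ((∑ z, σ z * (φ (ρ z / σ z)).toReal : ℝ) : EReal) := by
  have e2 : (∑ z, if σ z = 0 then ρ z else 0 : ℝ) = 0 :=
    Finset.sum_eq_zero fun z _ => if_neg (hσ z).ne'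
  unfold divergence
  rw [e2, EReal.coe_zero, mul_zero, add_zero]
  have e3 : ∀ s : Finset Z, ((∑ z ∈ s, σ z * (φ (ρ z / σ z)).toReal : ℝ) : EReal)
      = ∑ z ∈ s, if 0 < σ z then (σ z : EReal) * φ (ρ z / σ z) else 0 := by
    intro s
    induction s using Finset.induction_on with
    | empty => simp
    | insert a s ha ih =>
      rw [Finset.sum_insert ha, Finset.sum_insert ha, EReal.coe_add, ih, if_pos (hσ a),
        EReal.coe_mul, EReal.coe_toReal (h.2.2.1 _ (div_nonneg (hρ a) (hσ a).le))
          (h.1.2.2.1 _)]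
  exact (e3 _).symm

/-- Row part of the objective. -/
def hlpRow {Y : Type*} [Fintype Y] (ε : ℝ) (φ₁ : ℝ → EReal) (ν : Y → ℝ)
    (m : ℝ) (c p : Y → ℝ) : ℝ :=
  ∑ y, c y * p y + ε * ∑ y, (p y * Real.log (p y / (m * ν y)) - p y + m * ν y)
    + m * (φ₁ ((∑ y, p y) / m)).toReal

theorem hlp_EJ {W Y : Type*} [Fintype W] [Fintype Y]
    (c : W → Y → ℝ) (ε : ℝ) (φ₁ φ₂ : ℝ → EReal) (h₁ : AssumptionA φ₁) (h₂ : AssumptionA φ₂)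
    (μ : W → ℝ) (ν : Y → ℝ) (νm : Y → ℝ) (π : W → Y → ℝ)
    (hμ : ∀ x, 0 < μ x) (hν : ∀ y, 0 < ν y) (hm : ∀ y, 0 ≤ νm y) (hπ : ∀ x y, 0 ≤ π x y) :
    EJfun c ε φ₁ φ₂ μ ν νm π =
      ((∑ x, hlpRow ε φ₁ ν (μ x) (c x) (π x)
        + ∑ y, ν y * (φ₂ (((∑ x, π x y) + νm y) / ν y)).toReal : ℝ) : EReal) := by
  unfold EJfun
  rw [hlp_div φ₁ h₁ _ μ hμ (fun x => Finset.sum_nonneg fun y _ => hπ x y),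
    hlp_div φ₂ h₂ _ ν hν (fun y => add_nonneg (Finset.sum_nonneg fun x _ => hπ x y) (hm y))]
  unfold KLfin
  rw [if_pos (fun z hz => absurd hz (mul_pos (hμ z.1) (hν z.2)).ne')]
  rw [← EReal.coe_mul, ← EReal.coe_add, ← EReal.coe_add, ← EReal.coe_add]
  congr 2
  unfold hlpRow
  rw [Fintype.sum_prod_type, Finset.mul_sum, ← Finset.sum_add_distrib, ← Finset.sum_add_distrib]

theorem hlp_sub {X : Type*} [Fintype X] (J : Set X) [Fintype J] (f : X → ℝ) :
    ∑ x, f x = ∑ j : J, f j + ∑ x, (Jᶜ).indicator f x := by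
  have : ∑ j : J, f j = ∑ x, J.indicator f x := by
    rw [← Finset.sum_subtype J.toFinset (fun x => Set.mem_toFinset) f,
      ← Finset.sum_indicator_subset f (Finset.subset_univ J.toFinset)]
    simp
  rw [this, ← Finset.sum_add_distrib]
  exact Finset.sum_congr rfl fun x _ => (congrFun (Set.indicator_self_add_compl J f) x).symm

theorem hlp_step {X Y : Type*} [Fintype X] [Fintype Y]
    (μ : X → ℝ) (ν : Y → ℝ) (hμ : ∀ x, 0 < μ x) (hν : ∀ y, 0 < ν y)
    (c : X → Y → ℝ) (ε : ℝ)
    (φ₁ φ₂ : ℝ → EReal) (h₁ : AssumptionA φ₁) (h₂ : AssumptionA φ₂)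
    (update : Set X → (X → Y → ℝ) → (X → Y → ℝ))
    (hu : IsCellUpdate c ε φ₁ φ₂ μ ν update) (J : Set X) (π : X → Y → ℝ)
    (hπ : ∀ x y, 0 ≤ π x y) :
    Eglobal c ε φ₁ φ₂ μ ν (update J π) ≤ Eglobal c ε φ₁ φ₂ μ ν π := by
  obtain ⟨hn, hout, hmin⟩ := hu J π hπ
  have hm : ∀ y, 0 ≤ outMarg J π y := fun y =>
    Finset.sum_nonneg fun x _ => Set.indicator_nonneg (fun x _ => hπ x y) x
  have h := hmin (fun j y => π j y) (fun j y => hπ j y)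
  rw [hlp_EJ _ ε φ₁ φ₂ h₁ h₂ (fun j : J => μ j) ν _ (fun (j : J) y => update J π j y)
      (fun j => hμ j) hν hm (fun j y => hn j y),
    hlp_EJ _ ε φ₁ φ₂ h₁ h₂ (fun j : J => μ j) ν _ (fun (j : J) y => π j y)
      (fun j => hμ j) hν hm (fun j y => hπ j y),
    EReal.coe_le_coe_iff] at h
  unfold Eglobal
  rw [hlp_EJ c ε φ₁ φ₂ h₁ h₂ μ ν _ _ hμ hν (fun _ => le_rfl) hn,
    hlp_EJ c ε φ₁ φ₂ h₁ h₂ μ ν _ _ hμ hν (fun _ => le_rfl) hπ, EReal.coe_le_coe_iff]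
  have hmarg : ∀ y, ∑ x, (Jᶜ).indicator (fun x => update J π x y) x = outMarg J π y := by
    intro y
    refine Finset.sum_congr rfl fun x _ => ?_
    by_cases hx : x ∈ Jᶜ
    · rw [Set.indicator_of_mem hx, Set.indicator_of_mem hx, hout x hx]
    · rw [Set.indicator_of_notMem hx, Set.indicator_of_notMem hx]
  have hrow : ∑ x, (Jᶜ).indicator (fun x => hlpRow ε φ₁ ν (μ x) (c x) (update J π x)) x
      = ∑ x, (Jᶜ).indicator (fun x => hlpRow ε φ₁ ν (μ x) (c x) (π x)) x := by
    refine Finset.sum_congr rfl fun x _ => ?_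
    by_cases hx : x ∈ Jᶜ
    · rw [Set.indicator_of_mem hx, Set.indicator_of_mem hx]
      congr 1
      exact funext (hout x hx)
    · rw [Set.indicator_of_notMem hx, Set.indicator_of_notMem hx]
  have e1 : ∀ y, ∑ x, update J π x y + 0 = ∑ j : J, update J π j y + outMarg J π y := by
    intro y
    rw [add_zero, hlp_sub J (fun x => update J π x y), hmarg]
  have e2 : ∀ y, ∑ x, π x y + 0 = ∑ j : J, π j y + outMarg J π y := by
    intro y
    rw [add_zero, hlp_sub J (fun x => π x y)]
    rfl
  simp only [e1, e2]
  rw [hlp_sub J (fun x => hlpRow ε φ₁ ν (μ x) (c x) (update J π x)),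
    hlp_sub J (fun x => hlpRow ε φ₁ ν (μ x) (c x) (π x)), hrow]
  linarith

theorem hlp_fold {X Y : Type*} [Fintype X] [Fintype Y]
    (μ : X → ℝ) (ν : Y → ℝ) (hμ : ∀ x, 0 < μ x) (hν : ∀ y, 0 < ν y)
    (c : X → Y → ℝ) (ε : ℝ)
    (φ₁ φ₂ : ℝ → EReal) (h₁ : AssumptionA φ₁) (h₂ : AssumptionA φ₂)
    (update : Set X → (X → Y → ℝ) → (X → Y → ℝ))
    (hu : IsCellUpdate c ε φ₁ φ₂ μ ν update) (l : List (Set X)) :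
    ∀ π : X → Y → ℝ, (∀ x y, 0 ≤ π x y) →
    (∀ x y, 0 ≤ l.foldl (fun p J => update J p) π x y) ∧
    Eglobal c ε φ₁ φ₂ μ ν (l.foldl (fun p J => update J p) π) ≤ Eglobal c ε φ₁ φ₂ μ ν π := by
  induction l with
  | nil => exact fun π hπ => ⟨hπ, le_rfl⟩
  | cons J l ih =>
    intro π hπ
    have h := ih (update J π) (hu J π hπ).1
    exact ⟨h.1, h.2.trans (hlp_step μ ν hμ hν c ε φ₁ φ₂ h₁ h₂ update hu J π hπ)⟩

theorem hlp_young (s t : ℝ) (hs : 0 ≤ s) : s * t - Real.exp t ≤ s * Real.log s - s := by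
  rcases hs.eq_or_lt with rfl | hs
  · simp [Real.exp_nonneg]
  · have h := Real.add_one_le_exp (t - Real.log s)
    rw [Real.exp_sub, Real.exp_log hs, le_div_iff₀ hs] at h
    nlinarith

theorem hlp_entry (c ε m p : ℝ) (hε : 0 < ε) (hm : 0 < m) (hp : 0 ≤ p) :
    p + ε * m * (1 - Real.exp ((1 - c) / ε)) ≤
      c * p + ε * (p * Real.log (p / m) - p + m) := by
  have h := hlp_young (p / m) ((1 - c) / ε) (div_nonneg hp hm.le)
  have h2 := mul_le_mul_of_nonneg_left h (mul_pos hε hm).le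
  have e1 : ε * m * (p / m * ((1 - c) / ε) - Real.exp ((1 - c) / ε))
      = p * (1 - c) - ε * m * Real.exp ((1 - c) / ε) := by field_simp
  have e2 : ε * m * (p / m * Real.log (p / m) - p / m) = ε * (p * Real.log (p / m) - p) := by
    field_simp
  rw [e1, e2] at h2
  linarith

theorem hlp_bound {X Y : Type*} [Fintype X] [Fintype Y]
    (μ : X → ℝ) (ν : Y → ℝ) (hμ : ∀ x, 0 < μ x) (hν : ∀ y, 0 < ν y)
    (c : X → Y → ℝ) (ε : ℝ) (hε : 0 < ε)
    (φ₁ φ₂ : ℝ → EReal) (h₁ : AssumptionA φ₁) (h₂ : AssumptionA φ₂) (e0 : ℝ)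
    (π : X → Y → ℝ) (hπ : ∀ x y, 0 ≤ π x y)
    (hE : Eglobal c ε φ₁ φ₂ μ ν π ≤ ((e0 : ℝ) : EReal)) (x : X) (y : Y) :
    π x y ≤ e0 - ∑ x, ∑ y, ε * (μ x * ν y) * (1 - Real.exp ((1 - c x y) / ε)) := by
  unfold Eglobal at hE
  rw [hlp_EJ c ε φ₁ φ₂ h₁ h₂ μ ν _ _ hμ hν (fun _ => le_rfl) hπ, EReal.coe_le_coe_iff] at hE
  have a1 : 0 ≤ ∑ y, ν y * (φ₂ (((∑ x, π x y) + 0) / ν y)).toReal :=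
    Finset.sum_nonneg fun y _ => mul_nonneg (hν y).le (EReal.toReal_nonneg (h₂.2.1 _))
  have a2 : ∑ x, ∑ y, (π x y + ε * (μ x * ν y) * (1 - Real.exp ((1 - c x y) / ε)))
      ≤ ∑ x, hlpRow ε φ₁ ν (μ x) (c x) (π x) := by
    refine Finset.sum_le_sum fun x _ => ?_
    unfold hlpRow
    rw [Finset.mul_sum, ← Finset.sum_add_distrib]
    have b1 : 0 ≤ μ x * (φ₁ ((∑ y, π x y) / μ x)).toReal :=
      mul_nonneg (hμ x).le (EReal.toReal_nonneg (h₁.2.1 _))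
    have b2 := Finset.sum_le_sum fun y (_ : y ∈ Finset.univ) =>
      hlp_entry (c x y) ε (μ x * ν y) (π x y) hε (mul_pos (hμ x) (hν y)) (hπ x y)
    linarith
  have a3 : π x y ≤ ∑ x, ∑ y, π x y :=
    (Finset.single_le_sum (f := fun y => π x y) (fun y _ => hπ x y) (Finset.mem_univ y)).trans
      (Finset.single_le_sum (f := fun x => ∑ y, π x y)
        (fun x _ => Finset.sum_nonneg fun y _ => hπ x y) (Finset.mem_univ x))
  simp only [Finset.sum_add_distrib] at a2
  linarith

/-- along the sequential domain decomposition iterates the scores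
are nonincreasing, and there is a constant `C` — depending only on (an upper
bound `e0` for) `E(π⁰)` and on `μ, ν, c, ε, φ₁, φ₂` — such that
`0 ≤ π^k(x,y) ≤ C·μ(x)ν(y)` for all `k ≥ 1`. -/
theorem sequential_domdec_monotone_and_bounded
    {X Y : Type*} [Fintype X] [Fintype Y] [Nonempty X] [Nonempty Y]
    (μ : X → ℝ) (ν : Y → ℝ) (hμ : ∀ x, 0 < μ x) (hν : ∀ y, 0 < ν y)
    (c : X → Y → ℝ) (ε : ℝ) (hε : 0 < ε)
    (φ₁ φ₂ : ℝ → EReal) (h₁ : AssumptionA φ₁) (h₂ : AssumptionA φ₂)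
    (e0 : ℝ) :
    ∃ C : ℝ, ∀ {nA nB : ℕ} (JA : Fin nA → Set X) (JB : Fin nB → Set X),
      IsFinPartition JA → IsFinPartition JB →
      ∀ update : Set X → (X → Y → ℝ) → (X → Y → ℝ),
        IsCellUpdate c ε φ₁ φ₂ μ ν update →
      ∀ π0 : X → Y → ℝ, (∀ x y, 0 ≤ π0 x y) →
        Eglobal c ε φ₁ φ₂ μ ν π0 ≠ ⊤ →
        Eglobal c ε φ₁ φ₂ μ ν π0 ≤ ((e0 : ℝ) : EReal) →
      ∀ iter : ℕ → X → Y → ℝ, iter 0 = π0 →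
        (∀ k : ℕ, iter (k + 1) =
          if (k + 1) % 2 = 1 then sweep update JA (iter k)
          else sweep update JB (iter k)) →
        (∀ k : ℕ, Eglobal c ε φ₁ φ₂ μ ν (iter (k + 1))
            ≤ Eglobal c ε φ₁ φ₂ μ ν (iter k)) ∧
        ∀ k : ℕ, 1 ≤ k → ∀ x y,
          0 ≤ iter k x y ∧ iter k x y ≤ C * (μ x * ν y) := by
  set K : ℝ := e0 - ∑ x, ∑ y, ε * (μ x * ν y) * (1 - Real.exp ((1 - c x y) / ε)) with hK
  have hmn : ∀ x y, 0 < μ x * ν y := fun x y => mul_pos (hμ x) (hν y)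
  refine ⟨∑ x, ∑ y, |K| / (μ x * ν y), ?_⟩
  intro nA nB JA JB _ _ update hu π0 hπ0 _ hE0 iter hi0 hi
  have hsw : ∀ k, (∀ x y, 0 ≤ iter k x y) → (∀ x y, 0 ≤ iter (k + 1) x y) ∧
      Eglobal c ε φ₁ φ₂ μ ν (iter (k + 1)) ≤ Eglobal c ε φ₁ φ₂ μ ν (iter k) := by
    intro k hk
    rw [hi k]
    split_ifs
    · exact hlp_fold μ ν hμ hν c ε φ₁ φ₂ h₁ h₂ update hu _ _ hk
    · exact hlp_fold μ ν hμ hν c ε φ₁ φ₂ h₁ h₂ update hu _ _ hk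
  have hall : ∀ k, (∀ x y, 0 ≤ iter k x y) ∧
      Eglobal c ε φ₁ φ₂ μ ν (iter k) ≤ ((e0 : ℝ) : EReal) := by
    intro k
    induction k with
    | zero => rw [hi0]; exact ⟨hπ0, hE0⟩
    | succ k ih => exact ⟨(hsw k ih.1).1, (hsw k ih.1).2.trans ih.2⟩
  refine ⟨fun k => (hsw k (hall k).1).2, fun k _ x y => ⟨(hall k).1 x y, ?_⟩⟩
  have hb := hlp_bound μ ν hμ hν c ε hε φ₁ φ₂ h₁ h₂ e0 (iter k) (hall k).1 (hall k).2 x y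
  have hn : ∀ x y, 0 ≤ |K| / (μ x * ν y) := fun x y => div_nonneg (abs_nonneg _) (hmn x y).le
  have hC : |K| / (μ x * ν y) ≤ ∑ x, ∑ y, |K| / (μ x * ν y) :=
    (Finset.single_le_sum (f := fun y => |K| / (μ x * ν y)) (fun y _ => hn x y)
      (Finset.mem_univ y)).trans
      (Finset.single_le_sum (f := fun x => ∑ y, |K| / (μ x * ν y))
        (fun x _ => Finset.sum_nonneg fun y _ => hn x y) (Finset.mem_univ x))
  rw [div_le_iff₀ (hmn x y)] at hC
  exact (hb.trans (le_abs_self K)).trans hC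

end
end

section
/- Weak duality for the unbalanced cell subproblem on finite spaces: let X_J and Y be nonempty finite sets, μ_J: X_J → ℝ and ν: Y → ℝ strictly positive weight functions, c: X_J × Y → ℝ a cost, ε > 0, φ₁, φ₂ entropy functions, and ν_{-J}: Y → ℝ≥0. Then for every nonnegative plan π: X_J × Y → ℝ≥0 and all potentials α: X_J → ℝ, β: Y → ℝ, one has D_J(α, β | ν_{-J}) ≤ E_J(π | ν_{-J}). -/
open Filter Topology
open scoped Classical

noncomputable section

theorem aux_sum_ne_bot {Z : Type*} (s : Finset Z) (f : Z → EReal) (h : ∀ z, f z ≠ ⊥) :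
    ∑ z ∈ s, f z ≠ ⊥ := by
  classical
  induction s using Finset.induction_on with
  | empty => simp
  | insert a s ha ih =>
    rw [Finset.sum_insert ha]
    simp [EReal.add_eq_bot_iff, h, ih]

theorem aux_coe_sum {Z : Type*} (s : Finset Z) (f : Z → ℝ) :
    ((∑ z ∈ s, f z : ℝ) : EReal) = ∑ z ∈ s, (f z : EReal) := by
  classical
  induction s using Finset.induction_on with
  | empty => simp
  | insert a s ha ih =>
    rw [Finset.sum_insert ha, Finset.sum_insert ha, EReal.coe_add, ih]

theorem aux_mul_ne_bot (s : ℝ) (hs : 0 < s) (x : EReal) (hx : x ≠ ⊥) :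
    (s : EReal) * x ≠ ⊥ := by
  induction x with
  | bot => exact absurd rfl hx
  | top => rw [EReal.coe_mul_top_of_pos hs]; simp
  | coe x => rw [← EReal.coe_mul]; exact EReal.coe_ne_bot _

theorem aux_conj_ne_bot (φ : ℝ → EReal) (h : IsEntropyFn φ) (a : ℝ) : conjFn φ a ≠ ⊥ := by
  obtain ⟨-, -, hb, -, x, -, hx⟩ := h
  have h1 : ((a * x : ℝ) : EReal) - φ x ≤ conjFn φ a :=
    le_iSup (fun x : ℝ => ((a * x : ℝ) : EReal) - φ x) x
  intro h0
  rw [h0] at h1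
  have hbx := hb x
  generalize φ x = p at *
  induction p with
  | bot => exact absurd rfl hbx
  | top => exact absurd hx (lt_irrefl _)
  | coe p =>
    rw [← EReal.coe_sub] at h1
    exact EReal.coe_ne_bot _ (le_bot_iff.mp h1)

theorem aux_pt (φ : ℝ → EReal) (h : IsEntropyFn φ) (s r a : ℝ) (hs : 0 < s) :
    ((-(a * r) : ℝ) : EReal) ≤ (s : EReal) * conjFn φ (-a) + (s : EReal) * φ (r / s) := by
  have hC := aux_conj_ne_bot φ h (-a)
  have hp := h.2.2.1 (r / s)
  have h1 : ((-a * (r / s) : ℝ) : EReal) - φ (r / s) ≤ conjFn φ (-a) :=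
    le_iSup (fun x : ℝ => ((-a * x : ℝ) : EReal) - φ x) (r / s)
  generalize φ (r / s) = p at *
  generalize conjFn φ (-a) = C at *
  induction C with
  | bot => exact absurd rfl hC
  | top =>
    rw [EReal.coe_mul_top_of_pos hs, EReal.top_add_of_ne_bot (aux_mul_ne_bot s hs p hp)]
    exact le_top
  | coe C =>
    induction p with
    | bot => exact absurd rfl hp
    | top =>
      rw [EReal.coe_mul_top_of_pos hs,
        EReal.add_top_of_ne_bot (aux_mul_ne_bot s hs _ hC)]
      exact le_top
    | coe p =>
      norm_cast at h1 ⊢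
      have h2 := mul_le_mul_of_nonneg_left h1 hs.le
      have h3 : s * (-a * (r / s) - p) = -(a * r) - s * p := by field_simp
      linarith

theorem aux_div {Z : Type*} [Fintype Z] (φ : ℝ → EReal) (ρ σ : Z → ℝ) (hσ : ∀ z, 0 < σ z) :
    divergence φ ρ σ = ∑ z, (σ z : EReal) * φ (ρ z / σ z) := by
  unfold divergence
  simp [hσ, (hσ _).ne']

theorem aux_sum {Z : Type*} [Fintype Z] (φ : ℝ → EReal) (h : IsEntropyFn φ)
    (ρ σ a : Z → ℝ) (hσ : ∀ z, 0 < σ z) :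
    ((-∑ z, a z * ρ z : ℝ) : EReal) ≤
      (∑ z, (σ z : EReal) * conjFn φ (-(a z))) + divergence φ ρ σ := by
  rw [aux_div φ ρ σ hσ, ← Finset.sum_add_distrib, ← Finset.sum_neg_distrib, aux_coe_sum]
  exact Finset.sum_le_sum fun z _ => aux_pt φ h _ _ _ (hσ z)

theorem aux_real (k p t : ℝ) (hk : 0 < k) (hp : 0 ≤ p) :
    (1 - Real.exp t) * k ≤ p * Real.log (p / k) - p + k - t * p := by
  rcases hp.eq_or_lt with rfl | hp
  · have := mul_pos (Real.exp_pos t) hk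
    simp; nlinarith
  · have h1 := Real.add_one_le_exp (t - Real.log (p / k))
    rw [Real.exp_sub, Real.exp_log (div_pos hp hk)] at h1
    have h2 := mul_le_mul_of_nonneg_left h1 hp.le
    have h3 : p * (Real.exp t / (p / k)) = k * Real.exp t := by field_simp
    nlinarith

theorem aux_final (L K P Q N : ℝ) (C1 C2 D1 D2 : EReal)
    (hC1 : C1 ≠ ⊥) (hC2 : C2 ≠ ⊥) (hD1 : D1 ≠ ⊥) (hD2 : D2 ≠ ⊥)
    (h1 : ((-P : ℝ) : EReal) ≤ C1 + D1) (h2 : ((-Q : ℝ) : EReal) ≤ C2 + D2)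
    (h : L ≤ K - P - (Q - N)) :
    (L : EReal) - C1 - C2 - (N : EReal) ≤ (K : EReal) + D1 + D2 := by
  induction C1 with
  | bot => exact absurd rfl hC1
  | top => simp [sub_eq_add_neg]
  | coe C1 =>
  induction C2 with
  | bot => exact absurd rfl hC2
  | top => simp [sub_eq_add_neg]
  | coe C2 =>
  induction D1 with
  | bot => exact absurd rfl hD1
  | top =>
    rw [EReal.add_top_of_ne_bot (EReal.coe_ne_bot _), EReal.top_add_of_ne_bot hD2]
    exact le_top
  | coe D1 =>
  induction D2 with
  | bot => exact absurd rfl hD2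
  | top =>
    rw [← EReal.coe_add, EReal.add_top_of_ne_bot (EReal.coe_ne_bot _)]
    exact le_top
  | coe D2 =>
    norm_cast at *
    linarith

/-- weak duality for the unbalanced cell subproblem on finite
spaces: the dual objective never exceeds the primal objective. -/
theorem weak_duality_cell_subproblem
    {X Y : Type*} [Fintype X] [Fintype Y] [Nonempty X] [Nonempty Y]
    (μ : X → ℝ) (ν : Y → ℝ) (hμ : ∀ x, 0 < μ x) (hν : ∀ y, 0 < ν y)
    (c : X → Y → ℝ) (ε : ℝ) (hε : 0 < ε)
    (φ₁ φ₂ : ℝ → EReal) (h₁ : IsEntropyFn φ₁) (h₂ : IsEntropyFn φ₂)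
    (νm : Y → ℝ) (hνm : ∀ y, 0 ≤ νm y)
    (π : X → Y → ℝ) (hπ : ∀ x y, 0 ≤ π x y)
    (α : X → ℝ) (β : Y → ℝ) :
    DJfun c ε φ₁ φ₂ μ ν νm α β ≤ EJfun c ε φ₁ φ₂ μ ν νm π := by
  unfold DJfun EJfun
  have hk : ∀ x y, 0 < μ x * ν y := fun x y => mul_pos (hμ x) (hν y)
  have hKL : KLfin (fun p : X × Y => π p.1 p.2) (fun p : X × Y => μ p.1 * ν p.2) =
      ((∑ x, ∑ y, (π x y * Real.log (π x y / (μ x * ν y)) - π x y + μ x * ν y) : ℝ) : EReal) := by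
    unfold KLfin
    rw [if_pos (fun z hz => absurd hz (hk z.1 z.2).ne'), Fintype.sum_prod_type]
  rw [hKL, ← EReal.coe_mul, ← EReal.coe_add]
  refine aux_final _ _ (∑ x, α x * ∑ y, π x y) (∑ y, β y * ((∑ x, π x y) + νm y)) _ _ _ _ _
    ?_ ?_ ?_ ?_ (aux_sum φ₁ h₁ _ _ _ hμ) (aux_sum φ₂ h₂ _ _ _ hν) ?_
  · exact aux_sum_ne_bot _ _ fun z => aux_mul_ne_bot _ (hμ z) _ (aux_conj_ne_bot _ h₁ _)
  · exact aux_sum_ne_bot _ _ fun z => aux_mul_ne_bot _ (hν z) _ (aux_conj_ne_bot _ h₂ _)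
  · rw [aux_div _ _ _ hμ]
    exact aux_sum_ne_bot _ _ fun z => aux_mul_ne_bot _ (hμ z) _ (h₁.2.2.1 _)
  · rw [aux_div _ _ _ hν]
    exact aux_sum_ne_bot _ _ fun z => aux_mul_ne_bot _ (hν z) _ (h₂.2.2.1 _)
  · have e1 : ∑ x, α x * ∑ y, π x y = ∑ x, ∑ y, α x * π x y := by
      simp only [Finset.mul_sum]
    have e2 : ∑ y, β y * ((∑ x, π x y) + νm y) - ∑ y, β y * νm y
        = ∑ x, ∑ y, β y * π x y := by
      rw [Finset.sum_comm, ← Finset.sum_sub_distrib]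
      refine Finset.sum_congr rfl fun y _ => ?_
      rw [← Finset.mul_sum]; ring
    rw [e1, e2]
    simp only [Finset.mul_sum]
    simp only [← Finset.sum_add_distrib, ← Finset.sum_sub_distrib]
    refine Finset.sum_le_sum fun x _ => Finset.sum_le_sum fun y _ => ?_
    have h := mul_le_mul_of_nonneg_left
      (aux_real (μ x * ν y) (π x y) ((α x + β y - c x y) / ε) (hk x y) (hπ x y)) hε.le
    have h3 : ε * ((α x + β y - c x y) / ε * π x y) = (α x + β y - c x y) * π x y := by
      field_simp
    nlinarith

end
end

section
/- Primal–dual gap formula for KL soft-marginals: let X_J and Y be nonempty finite sets, μ_J: X_J → ℝ and ν: Y → ℝ strictly positive weight functions, c: X_J × Y → ℝ a cost, ε, λ > 0, and take D₁ = D₂ = λ·KL (i.e. φ₁(s) = φ₂(s) = λ(s log s − s + 1), with conjugate φᵢ*(z) = λ(e^{z/λ} − 1)). Let ν_{-J}: Y → ℝ≥0, and suppose α: X_J → ℝ and β: Y → ℝ satisfy, for every y ∈ Y, the Y-half Sinkhorn iteration identity exp(−β(y)/ε)·[exp(−β(y)/λ) − ν_{-J}(y)/ν(y)] = Σ_{x∈X_J}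 exp((α(x) − c(x,y))/ε)·μ_J(x). Define π(x,y) := exp((α(x)+β(y)−c(x,y))/ε)·μ_J(x)ν(y). Then E_J(π | ν_{-J}) − D_J(α, β | ν_{-J}) = λ·KL(P_X π | e^{−α/λ}·μ_J), where (e^{−α/λ}·μ_J)(x) := exp(−α(x)/λ)·μ_J(x). -/
open Filter Topology

noncomputable section

/-- primal–dual gap formula for `λ·KL` soft-marginals. If the
potentials `(α, β)` satisfy the `Y`-half Sinkhorn iteration identity and `π` is
the associated diagonal-scaling plan, then
`E_J(π|ν_{-J}) − D_J(α,β|ν_{-J}) = λ·KL(P_X π | e^{−α/λ}·μ_J)`. -/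
theorem primal_dual_gap_formula_KL
    {X Y : Type*} [Fintype X] [Fintype Y] [Nonempty X] [Nonempty Y]
    (μ : X → ℝ) (ν : Y → ℝ) (hμ : ∀ x, 0 < μ x) (hν : ∀ y, 0 < ν y)
    (c : X → Y → ℝ) (ε lam : ℝ) (hε : 0 < ε) (hlam : 0 < lam)
    (νm : Y → ℝ) (hνm : ∀ y, 0 ≤ νm y)
    (α : X → ℝ) (β : Y → ℝ)
    -- the Y-half Sinkhorn iteration identity
    (hhalf : ∀ y, Real.exp (-(β y) / ε) * (Real.exp (-(β y) / lam) - νm y / ν y)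
      = ∑ x, Real.exp ((α x - c x y) / ε) * μ x) :
    -- the diagonal-scaling primal plan associated with (α, β)
    let π : X → Y → ℝ := fun x y =>
      Real.exp ((α x + β y - c x y) / ε) * (μ x * ν y)
    -- its marginals
    let ρX : X → ℝ := fun x => ∑ y, π x y
    let ρY : Y → ℝ := fun y => ∑ x, π x y
    -- primal objective E_J(π|ν_{-J}) with D₁ = D₂ = λ·KL
    let E : ℝ :=
      (∑ x, ∑ y, c x y * π x y)
      + ε * (∑ x, ∑ y,
          (π x y * Real.log (π x y / (μ x * ν y)) - π x y + μ x * ν y))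
      + lam * (∑ x, (ρX x * Real.log (ρX x / μ x) - ρX x + μ x))
      + lam * (∑ y, ((ρY y + νm y) * Real.log ((ρY y + νm y) / ν y)
          - (ρY y + νm y) + ν y))
    -- dual objective D_J(α, β|ν_{-J})
    let D : ℝ :=
      ε * (∑ x, ∑ y, (1 - Real.exp ((α x + β y - c x y) / ε)) * (μ x * ν y))
      - (∑ x, lam * (Real.exp (-(α x) / lam) - 1) * μ x)
      - (∑ y, lam * (Real.exp (-(β y) / lam) - 1) * ν y)
      - (∑ y, β y * νm y)
    E - D = lam * ∑ x, (ρX x * Real.log (ρX x / (Real.exp (-(α x) / lam) * μ x))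
        - ρX x + Real.exp (-(α x) / lam) * μ x) := by
  intro π ρX ρY E D
  have hY : ∀ y, ρY y + νm y = Real.exp (-(β y) / lam) * ν y := by
    intro y
    have h1 : ρY y = Real.exp (β y / ε) * ν y * ∑ x, Real.exp ((α x - c x y) / ε) * μ x := by
      simp only [ρY, π]
      rw [Finset.mul_sum]
      refine Finset.sum_congr rfl fun x _ => ?_
      have : (α x + β y - c x y) / ε = β y / ε + (α x - c x y) / ε := by ring
      rw [this, Real.exp_add]
      ring
    have h2 : Real.exp (β y / ε) * Real.exp (-(β y) / ε) = 1 := by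
      rw [← Real.exp_add, neg_div, add_neg_cancel, Real.exp_zero]
    have h3 : νm y / ν y * ν y = νm y := div_mul_cancel₀ _ (hν y).ne'
    rw [h1, ← hhalf y]
    linear_combination (ν y * (Real.exp (-(β y) / lam) - νm y / ν y)) * h2 - h3
  have hYt : lam * (∑ y, ((ρY y + νm y) * Real.log ((ρY y + νm y) / ν y)
          - (ρY y + νm y) + ν y)) + (∑ y, lam * (Real.exp (-(β y) / lam) - 1) * ν y)
      + (∑ y, β y * νm y) = - ∑ y, β y * ρY y := by
    rw [Finset.mul_sum, ← Finset.sum_add_distrib, ← Finset.sum_add_distrib,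
      ← Finset.sum_neg_distrib]
    refine Finset.sum_congr rfl fun y _ => ?_
    have h := hY y
    have hl : lam * Real.log ((ρY y + νm y) / ν y) = - β y := by
      rw [h, mul_div_cancel_right₀ _ (hν y).ne', Real.log_exp]
      field_simp
    linear_combination (ρY y + νm y) * hl - lam * h
  have hP : (∑ x, ∑ y, c x y * π x y)
      + ε * (∑ x, ∑ y,
          (π x y * Real.log (π x y / (μ x * ν y)) - π x y + μ x * ν y))
      - ε * (∑ x, ∑ y, (1 - Real.exp ((α x + β y - c x y) / ε)) * (μ x * ν y))
      = ∑ x, α x * ρX x + ∑ y, β y * ρY y := by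
    have e1 : ∑ x, α x * ρX x = ∑ x, ∑ y, α x * π x y :=
      Finset.sum_congr rfl fun x _ => Finset.mul_sum _ _ _
    have e2 : ∑ y, β y * ρY y = ∑ x, ∑ y, β y * π x y := by
      rw [Finset.sum_comm]
      exact Finset.sum_congr rfl fun x _ => Finset.mul_sum _ _ _
    rw [e1, e2]
    simp only [Finset.mul_sum, ← Finset.sum_add_distrib, ← Finset.sum_sub_distrib]
    refine Finset.sum_congr rfl fun x _ => Finset.sum_congr rfl fun y _ => ?_
    have hl : ε * Real.log (π x y / (μ x * ν y)) = α x + β y - c x y := by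
      simp only [π]
      rw [mul_div_cancel_right₀ _ (mul_pos (hμ x) (hν y)).ne', Real.log_exp]
      field_simp
    have hp : π x y = Real.exp ((α x + β y - c x y) / ε) * (μ x * ν y) := rfl
    linear_combination π x y * hl - ε * hp
  have hX : lam * (∑ x, (ρX x * Real.log (ρX x / μ x) - ρX x + μ x))
      + (∑ x, lam * (Real.exp (-(α x) / lam) - 1) * μ x) + ∑ x, α x * ρX x
      = lam * ∑ x, (ρX x * Real.log (ρX x / (Real.exp (-(α x) / lam) * μ x))
        - ρX x + Real.exp (-(α x) / lam) * μ x) := by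
    simp only [Finset.mul_sum, ← Finset.sum_add_distrib]
    refine Finset.sum_congr rfl fun x _ => ?_
    have hpos : 0 < ρX x := Finset.sum_pos
      (fun y _ => mul_pos (Real.exp_pos _) (mul_pos (hμ x) (hν y))) Finset.univ_nonempty
    have hl : lam * Real.log (ρX x / (Real.exp (-(α x) / lam) * μ x))
        = lam * Real.log (ρX x / μ x) + α x := by
      rw [Real.log_div hpos.ne' (mul_pos (Real.exp_pos _) (hμ x)).ne',
        Real.log_mul (Real.exp_pos _).ne' (hμ x).ne', Real.log_exp,
        Real.log_div hpos.ne' (hμ x).ne']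
      field_simp
      ring
    linear_combination - ρX x * hl
  simp only [E, D]
  linear_combination hYt + hP + hX

end
end
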